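/- arXiv:1405.3698 — 2 statements merged into one kernel-verified Lean document; each statement's English description precedes it below -/
import Mathlib

section
/- Let V be an 8-dimensional oriented vector space, H a 7-dimensional subspace, φ a positive three-form on H, and v ∈ V transverse to H inducing the orientation on H. Let g be the unique inner product on V agreeing on H with the inner product associated to φ, with ‖v‖ = 1 and v ⊥ H. Then Ω = v♭ ∧ φ + ∗(v♭ ∧ φ) is an admissible four-form on V, and the inner product on V induced by Ω is exactly g. -/
noncomputable section

open scoped RealInnerProductSpace BigOperators

def pickCoords {n k : ℕ} (idx : Fin k → Fin n) : (Fin n → ℝ) →ₗ[ℝ] (Fin k → ℝ) :=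
  LinearMap.pi fun a => LinearMap.proj (idx a)

def dxs {n k : ℕ} (idx : Fin k → Fin n) : (Fin n → ℝ) [⋀^Fin k]→ₗ[ℝ] ℝ :=
  (Matrix.detRowAlternating).compLinearMap (pickCoords idx)

def wedgeAM {V : Type*} [AddCommGroup V] [Module ℝ V] {k l : ℕ}
    (α : V [⋀^Fin k]→ₗ[ℝ] ℝ) (β : V [⋀^Fin l]→ₗ[ℝ] ℝ) : V [⋀^Fin (k + l)]→ₗ[ℝ] ℝ :=
  (TensorProduct.lid ℝ ℝ).toLinearMap.compAlternatingMap
    ((α.domCoprod β).domDomCongr finSumFinEquiv)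

/-- The Cayley four-form `Ω₀` on `ℝ⁸` (with `0`-based indices). -/
def Omega0 : (Fin 8 → ℝ) [⋀^Fin 4]→ₗ[ℝ] ℝ :=
  dxs ![0,1,2,3] + dxs ![0,1,4,5] + dxs ![0,1,6,7] + dxs ![0,2,4,6]
    - dxs ![0,2,5,7] - dxs ![0,3,4,7] - dxs ![0,3,5,6] - dxs ![1,2,4,7]
    - dxs ![1,2,5,6] - dxs ![1,3,4,6] + dxs ![1,3,5,7] + dxs ![2,3,4,5]
    + dxs ![2,3,6,7] + dxs ![4,5,6,7]

/-- The standard `G₂` three-form on `ℝ⁷` (0-based indices). -/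
def phi0 : (Fin 7 → ℝ) [⋀^Fin 3]→ₗ[ℝ] ℝ :=
  dxs ![0,1,2] + dxs ![0,3,4] + dxs ![0,5,6] + dxs ![1,3,5]
    - dxs ![1,4,6] - dxs ![2,3,6] - dxs ![2,4,5]

/-- The `G₂` three-form `φ₀` written in the last seven coordinates of `ℝ⁸` and extended to `ℝ⁸`
annihilating `e₁`. -/
def phi0ext : (Fin 8 → ℝ) [⋀^Fin 3]→ₗ[ℝ] ℝ :=
  dxs ![1,2,3] + dxs ![1,4,5] + dxs ![1,6,7] + dxs ![2,4,6]
    - dxs ![2,5,7] - dxs ![3,4,7] - dxs ![3,5,6]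

/-- The inclusion `ℝ⁷ ↪ ℝ⁸` onto the last seven coordinates. -/
def incl7 : (Fin 7 → ℝ) →ₗ[ℝ] (Fin 8 → ℝ) :=
  LinearMap.pi fun i : Fin 8 =>
    Fin.cases (motive := fun _ => (Fin 7 → ℝ) →ₗ[ℝ] ℝ) 0 (fun j => LinearMap.proj j) i

variable {V : Type*} [NormedAddCommGroup V] [InnerProductSpace ℝ V] [FiniteDimensional ℝ V]

/-- `f : ℝ⁸ → V` is orientation-preserving. -/
def OrientedEquiv (o : Orientation ℝ V (Fin 8)) (f : (Fin 8 → ℝ) ≃ₗ[ℝ] V) : Prop :=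
  Orientation.map (Fin 8) f ((Pi.basisFun ℝ (Fin 8)).orientation) = o

/-- `f : ℝ⁸ → V` is an isometry for the standard inner product. -/
def IsometricEquiv (f : (Fin 8 → ℝ) ≃ₗ[ℝ] V) : Prop :=
  ∀ x y : Fin 8 → ℝ, ⟪f x, f y⟫ = ∑ i, x i * y i

/-- A four-form `Ω` on the oriented `8`-dimensional space `V` is *admissible* if some
orientation-preserving isomorphism `ℝ⁸ → V` pulls it back to the Cayley form `Ω₀`. -/
def AdmissibleForm (o : Orientation ℝ V (Fin 8)) (Ω : V [⋀^Fin 4]→ₗ[ℝ] ℝ) : Prop :=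
  ∃ f : (Fin 8 → ℝ) ≃ₗ[ℝ] V, OrientedEquiv o f ∧ Ω.compLinearMap f.toLinearMap = Omega0

/-- `Ω` is admissible and the inner product it induces is exactly the inner product of `V`. -/
def AdmissibleFormInducing (o : Orientation ℝ V (Fin 8)) (Ω : V [⋀^Fin 4]→ₗ[ℝ] ℝ) : Prop :=
  ∃ f : (Fin 8 → ℝ) ≃ₗ[ℝ] V, OrientedEquiv o f ∧ IsometricEquiv f ∧
    Ω.compLinearMap f.toLinearMap = Omega0

/-- The three-form `φ` on `V` (annihilating `v`) is, on the hyperplane `H` endowed with the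
orientation induced by `o` and `v`, a positive three-form whose associated inner product is the
restriction of the inner product of `V`; moreover `v` is a unit vector orthogonal to `H`. -/
def PositiveAdaptedInducing (o : Orientation ℝ V (Fin 8)) (φ : V [⋀^Fin 3]→ₗ[ℝ] ℝ)
    (v : V) (H : Submodule ℝ V) : Prop :=
  ∃ f : (Fin 8 → ℝ) ≃ₗ[ℝ] V, OrientedEquiv o f ∧ IsometricEquiv f ∧
    f (Pi.single 0 1) = v ∧ (∀ x : Fin 8 → ℝ, x 0 = 0 → f x ∈ H) ∧
    φ.compLinearMap f.toLinearMap = phi0ext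

/-- The one-form `v♭ = ⟪v,·⟫`. -/
def flatForm (v : V) : V [⋀^Fin 1]→ₗ[ℝ] ℝ :=
  AlternatingMap.ofSubsingleton ℝ V ℝ 0 (innerₗ V v)

/-- The inner product induced on `k`-forms on `V`, computed in an orthonormal basis. -/
def formInnerV (k : ℕ) (α β : V [⋀^Fin k]→ₗ[ℝ] ℝ) : ℝ :=
  (k.factorial : ℝ)⁻¹ *
    ∑ f : Fin k → Fin (Module.finrank ℝ V),
      α (fun j => stdOrthonormalBasis ℝ V (f j)) * β (fun j => stdOrthonormalBasis ℝ V (f j))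

/-- The volume form of `(V, ⟪·,·⟫, o)`. -/
def volV (o : Orientation ℝ V (Fin 8)) (hd : Module.finrank ℝ V = 8) :
    V [⋀^Fin 8]→ₗ[ℝ] ℝ :=
  letI : Fact (Module.finrank ℝ V = 8) := ⟨hd⟩
  o.volumeForm

/-- `ψ = ∗α` for `4`-forms on `V`, w.r.t. the inner product and orientation of `V`:
`γ ∧ ψ = ⟨γ, α⟩ vol` for every four-form `γ`. -/
def IsHodgeDualV (o : Orientation ℝ V (Fin 8)) (hd : Module.finrank ℝ V = 8)
    (α ψ : V [⋀^Fin 4]→ₗ[ℝ] ℝ) : Prop :=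
  ∀ γ : V [⋀^Fin 4]→ₗ[ℝ] ℝ, wedgeAM γ ψ = formInnerV 4 γ α • volV o hd

/-!
Positivity of `φ` provides an oriented orthonormal basis `b` of `V` with first vector `v` in which
`φ` becomes `φ₀`, so that `v♭ ∧ φ` is a signed sum of seven basic four-forms `dx_I`. If `(I, J)` is
an even permutation of the coordinates, then `∗dx_I = dx_J`: for every four-form `γ`, both
`⟨γ, dx_I⟩` and the value of `γ ∧ dx_J` on `(b_I, b_J)` are equal to `γ(b_I)`. By the expansion
`γ = (1/k!) ∑_K γ(b_K) dx_K` these two equalities become determinant identities, a transposition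
and a block triangular expansion. The seven duals sum to `∗φ₀`, and `dx₀ ∧ φ₀ + ∗φ₀ = Ω₀` term by
term.
-/

section Wedge

variable {E F : Type*} [AddCommGroup E] [Module ℝ E] [AddCommGroup F] [Module ℝ F] {k l : ℕ}

/-- The wedge product `wedgeAM` as a bilinear map. -/
def wedgeBilin (E : Type*) [AddCommGroup E] [Module ℝ E] (k l : ℕ) :
    (E [⋀^Fin k]→ₗ[ℝ] ℝ) →ₗ[ℝ] (E [⋀^Fin l]→ₗ[ℝ] ℝ) →ₗ[ℝ] (E [⋀^Fin (k + l)]→ₗ[ℝ] ℝ) :=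
  TensorProduct.curry <|
    LinearMap.compAlternatingMapₗ ℝ (TensorProduct.lid ℝ ℝ).toLinearMap ∘ₗ
      (AlternatingMap.domDomCongrₗ ℝ finSumFinEquiv).toLinearMap ∘ₗ AlternatingMap.domCoprod'

theorem wedgeBilin_apply (α : E [⋀^Fin k]→ₗ[ℝ] ℝ) (β : E [⋀^Fin l]→ₗ[ℝ] ℝ) :
    wedgeBilin E k l α β = wedgeAM α β :=
  rfl

theorem wedgeAM_add (α : E [⋀^Fin k]→ₗ[ℝ] ℝ) (β β' : E [⋀^Fin l]→ₗ[ℝ] ℝ) :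
    wedgeAM α (β + β') = wedgeAM α β + wedgeAM α β' :=
  map_add (wedgeBilin E k l α) β β'

theorem wedgeAM_sub (α : E [⋀^Fin k]→ₗ[ℝ] ℝ) (β β' : E [⋀^Fin l]→ₗ[ℝ] ℝ) :
    wedgeAM α (β - β') = wedgeAM α β - wedgeAM α β' :=
  map_sub (wedgeBilin E k l α) β β'

theorem sum_smul_wedgeAM {ι : Type*} (s : Finset ι) (c : ι → ℝ) (α : ι → E [⋀^Fin k]→ₗ[ℝ] ℝ)
    (β : E [⋀^Fin l]→ₗ[ℝ] ℝ) :
    wedgeAM (∑ i ∈ s, c i • α i) β = ∑ i ∈ s, c i • wedgeAM (α i) β := by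
  simp only [← wedgeBilin_apply, map_sum, map_smul, LinearMap.sum_apply, LinearMap.smul_apply]

theorem alternatingMap_sum_smul_apply {ι : Type*} (s : Finset ι) (c : ι → ℝ)
    (α : ι → E [⋀^Fin k]→ₗ[ℝ] ℝ) (w : Fin k → E) :
    (∑ i ∈ s, c i • α i) w = ∑ i ∈ s, c i * α i w := by
  induction s using Finset.cons_induction with
  | empty => rfl
  | cons i s hi ih => simp [Finset.sum_cons, ih]

theorem wedgeAM_compLinearMap (α : E [⋀^Fin k]→ₗ[ℝ] ℝ) (β : E [⋀^Fin l]→ₗ[ℝ] ℝ)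
    (f : F →ₗ[ℝ] E) :
    (wedgeAM α β).compLinearMap f = wedgeAM (α.compLinearMap f) (β.compLinearMap f) := by
  ext w
  simp only [wedgeAM, AlternatingMap.compLinearMap_apply, LinearMap.compAlternatingMap_apply,
    AlternatingMap.domDomCongr_apply, AlternatingMap.domCoprod_apply, sum_apply]
  congr 1
  refine Finset.sum_congr rfl fun σ _ => ?_
  induction σ using Quotient.inductionOn' with
  | h σ => rfl

open MultilinearMap in
theorem wedgeAM_alternatization (p : MultilinearMap ℝ (fun _ : Fin k => E) ℝ)
    (q : MultilinearMap ℝ (fun _ : Fin l => E) ℝ) :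
    wedgeAM (alternatization p) (alternatization q) =
      alternatization ((TensorProduct.lid ℝ ℝ).toLinearMap.compMultilinearMap
        ((p.domCoprod q).domDomCongr finSumFinEquiv)) := by
  rw [wedgeAM, ← domCoprod_alternization, LinearMap.compMultilinearMap_alternatization]
  congr 1
  ext w
  simp only [AlternatingMap.domDomCongr_apply, alternatization_apply]
  rw [← Equiv.sum_comp (finSumFinEquiv (m := k) (n := l)).permCongr]
  refine Finset.sum_congr rfl fun σ _ => ?_
  rw [Equiv.Perm.sign_permCongr]
  simp [domDomCongr_apply, Function.comp_def]

end Wedge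

section CoordForm

variable {E : Type*} [AddCommGroup E] [Module ℝ E] {n k l : ℕ}

/-- The basic form `dx_{I 0} ∧ ⋯ ∧ dx_{I (k - 1)}` in the coordinates of a basis. The multi-index
`I` need be neither increasing nor injective. -/
def coordForm (b : Module.Basis (Fin n) ℝ E) (I : Fin k → Fin n) : E [⋀^Fin k]→ₗ[ℝ] ℝ :=
  (dxs I).compLinearMap b.equivFun.toLinearMap

/-- The product of coordinates `dx_{I 0} ⊗ ⋯ ⊗ dx_{I (k - 1)}`, whose alternatization is
`coordForm b I`. -/
def coordProd (b : Module.Basis (Fin n) ℝ E) (I : Fin k → Fin n) :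
    MultilinearMap ℝ (fun _ : Fin k => E) ℝ :=
  (MultilinearMap.mkPiAlgebra ℝ (Fin k) ℝ).compLinearMap fun j => b.coord (I j)

theorem coordProd_apply (b : Module.Basis (Fin n) ℝ E) (I : Fin k → Fin n) (w : Fin k → E) :
    coordProd b I w = ∏ j, b.repr (w j) (I j) :=
  rfl

theorem coordForm_apply (b : Module.Basis (Fin n) ℝ E) (I : Fin k → Fin n) (w : Fin k → E) :
    coordForm b I w = (Matrix.of fun i j => b.repr (w i) (I j)).det :=
  rfl

theorem coordForm_basisFun (I : Fin k → Fin n) : coordForm (Pi.basisFun ℝ (Fin n)) I = dxs I := by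
  ext w
  rfl

theorem coordForm_eq_alternatization (b : Module.Basis (Fin n) ℝ E) (I : Fin k → Fin n) :
    coordForm b I = MultilinearMap.alternatization (coordProd b I) := by
  ext w
  rw [coordForm_apply, Matrix.det_apply, MultilinearMap.alternatization_apply]
  rfl

theorem wedgeAM_coordForm (b : Module.Basis (Fin n) ℝ E) (I : Fin k → Fin n)
    (J : Fin l → Fin n) :
    wedgeAM (coordForm b I) (coordForm b J) = coordForm b (Fin.append I J) := by
  simp only [coordForm_eq_alternatization, wedgeAM_alternatization]
  congr 1
  ext w
  simp [coordProd_apply, Fin.prod_univ_add, MultilinearMap.domCoprod_apply]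

theorem coe_eq_sum_smul_coordProd (b : Module.Basis (Fin n) ℝ E) (γ : E [⋀^Fin k]→ₗ[ℝ] ℝ) :
    (γ : MultilinearMap ℝ (fun _ : Fin k => E) ℝ) =
      ∑ I : Fin k → Fin n, γ (b ∘ I) • coordProd b I := by
  ext w
  calc γ w = γ fun j => ∑ i, b.repr (w j) i • b i := by simp only [b.sum_repr]
    _ = ∑ I : Fin k → Fin n, γ fun j => b.repr (w j) (I j) • b (I j) :=
      γ.toMultilinearMap.map_sum _
    _ = ∑ I : Fin k → Fin n, (∏ j, b.repr (w j) (I j)) • γ (b ∘ I) :=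
      Finset.sum_congr rfl fun I _ => γ.map_smul_univ _ _
    _ = _ := by simp [coordProd_apply, mul_comm]

-- Alternatize `coe_eq_sum_smul_coordProd`: an alternating map is multiplied by `k!`.
theorem eq_sum_smul_coordForm (b : Module.Basis (Fin n) ℝ E) (γ : E [⋀^Fin k]→ₗ[ℝ] ℝ) :
    γ = ∑ I : Fin k → Fin n, ((k.factorial : ℝ)⁻¹ * γ (b ∘ I)) • coordForm b I := by
  have alternatization_smul (c : ℝ) (p : MultilinearMap ℝ (fun _ : Fin k => E) ℝ) :
      (c • p).alternatization = c • p.alternatization := by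
    ext w
    simp [MultilinearMap.alternatization_apply, Finset.mul_sum, mul_smul_comm]
  have factorial_smul :
      (k.factorial : ℝ) • γ = ∑ I : Fin k → Fin n, γ (b ∘ I) • coordForm b I := by
    have h := γ.coe_alternatization
    rw [coe_eq_sum_smul_coordProd b γ, map_sum, Fintype.card_fin] at h
    simp only [alternatization_smul, ← coordForm_eq_alternatization] at h
    rw [h, Nat.cast_smul_eq_nsmul]
  simp only [mul_smul, ← Finset.smul_sum, ← factorial_smul]
  rw [inv_smul_smul₀ (Nat.cast_ne_zero.2 k.factorial_ne_zero)]

theorem coordForm_apply_basis (b : Module.Basis (Fin n) ℝ E) (I K : Fin k → Fin n) :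
    coordForm b K (b ∘ I) = ((1 : Matrix (Fin n) (Fin n) ℝ).submatrix I K).det := by
  rw [coordForm_apply]
  congr 1
  ext i j
  simp [Finsupp.single_apply, Matrix.one_apply]

-- The matrix of Kronecker deltas is block triangular, with the identity as its second block.
theorem coordForm_append_apply_basis (b : Module.Basis (Fin n) ℝ E) (I K : Fin k → Fin n)
    (J : Fin l → Fin n) (hIJ : Function.Injective (Fin.append I J)) :
    coordForm b (Fin.append K J) (b ∘ Fin.append I J) = coordForm b K (b ∘ I) := by
  obtain ⟨-, hJ, hdisj⟩ := Fin.append_injective_iff.1 hIJ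
  have blocks : ((1 : Matrix (Fin n) (Fin n) ℝ).submatrix (Fin.append I J)
        (Fin.append K J)).submatrix finSumFinEquiv finSumFinEquiv =
      Matrix.fromBlocks (Matrix.submatrix 1 I K) 0 (Matrix.submatrix 1 J K) 1 := by
    ext (i | i) (j | j) <;> simp [Matrix.one_apply, hJ.eq_iff, hdisj]
  rw [coordForm_apply_basis, coordForm_apply_basis, ← Matrix.det_submatrix_equiv_self
    finSumFinEquiv, blocks, Matrix.det_fromBlocks_zero₁₂, Matrix.det_one, mul_one]

theorem wedgeAM_coordForm_apply_basis (b : Module.Basis (Fin n) ℝ E) (γ : E [⋀^Fin k]→ₗ[ℝ] ℝ)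
    (I : Fin k → Fin n) (J : Fin l → Fin n) (hIJ : Function.Injective (Fin.append I J)) :
    wedgeAM γ (coordForm b J) (b ∘ Fin.append I J) = γ (b ∘ I) := by
  rw [eq_sum_smul_coordForm b γ, sum_smul_wedgeAM]
  simp only [alternatingMap_sum_smul_apply, wedgeAM_coordForm,
    coordForm_append_apply_basis b I _ J hIJ]

theorem wedgeAM_coordForm_eq_smul_det (b : Module.Basis (Fin (k + l)) ℝ E)
    (γ : E [⋀^Fin k]→ₗ[ℝ] ℝ) (I : Fin k → Fin (k + l)) (J : Fin l → Fin (k + l))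
    (s : Equiv.Perm (Fin (k + l))) (hs : Fin.append I J = s) :
    wedgeAM γ (coordForm b J) = (Equiv.Perm.sign s • γ (b ∘ I)) • b.det := by
  rw [← wedgeAM_coordForm_apply_basis b γ I J (hs ▸ s.injective), hs, AlternatingMap.map_perm,
    smul_smul, Int.units_mul_self, one_smul]
  exact AlternatingMap.eq_smul_basis_det b _

end CoordForm

section OrthonormalBasis

variable {W : Type*} [NormedAddCommGroup W] [InnerProductSpace ℝ W] {n k : ℕ}

theorem coordForm_apply_orthonormalBasis_comm {m : ℕ} (b : OrthonormalBasis (Fin n) ℝ W)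
    (e : OrthonormalBasis (Fin m) ℝ W) (I : Fin k → Fin n) (K : Fin k → Fin m) :
    coordForm b.toBasis I (e ∘ K) = coordForm e.toBasis K (b ∘ I) := by
  rw [coordForm_apply, coordForm_apply, ← Matrix.det_transpose]
  congr 1
  ext i j
  simp [OrthonormalBasis.repr_apply_apply, real_inner_comm]

theorem volV_eq_det (hd : Module.finrank ℝ W = 8) (b : OrthonormalBasis (Fin 8) ℝ W) :
    volV b.toBasis.orientation hd = b.toBasis.det :=
  letI : Fact (Module.finrank ℝ W = 8) := ⟨hd⟩
  b.toBasis.orientation.volumeForm_robust b rfl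

theorem formInnerV_coordForm (b : OrthonormalBasis (Fin n) ℝ V) (γ : V [⋀^Fin k]→ₗ[ℝ] ℝ)
    (I : Fin k → Fin n) :
    formInnerV k γ (coordForm b.toBasis I) = γ (b ∘ I) := by
  let e := stdOrthonormalBasis ℝ V
  calc formInnerV k γ (coordForm b.toBasis I)
      = (k.factorial : ℝ)⁻¹ * ∑ K, γ (e ∘ K) * coordForm b.toBasis I (e ∘ K) := rfl
    _ = ∑ K, ((k.factorial : ℝ)⁻¹ * γ (e ∘ K)) * coordForm e.toBasis K (b ∘ I) := by
      simp only [coordForm_apply_orthonormalBasis_comm b e, Finset.mul_sum, mul_assoc]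
    _ = γ (b ∘ I) := by
      conv_rhs => rw [eq_sum_smul_coordForm e.toBasis γ]
      rw [alternatingMap_sum_smul_apply, e.coe_toBasis]

theorem flatForm_orthonormalBasis (b : OrthonormalBasis (Fin n) ℝ W) (i : Fin n) :
    flatForm (b i) = coordForm b.toBasis ![i] := by
  ext w
  simp [flatForm, coordForm_apply, OrthonormalBasis.repr_apply_apply]

theorem formInnerV_add (γ α β : V [⋀^Fin k]→ₗ[ℝ] ℝ) :
    formInnerV k γ (α + β) = formInnerV k γ α + formInnerV k γ β := by
  simp only [formInnerV, AlternatingMap.add_apply, mul_add, Finset.sum_add_distrib]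

theorem formInnerV_sub (γ α β : V [⋀^Fin k]→ₗ[ℝ] ℝ) :
    formInnerV k γ (α - β) = formInnerV k γ α - formInnerV k γ β := by
  simp only [formInnerV, AlternatingMap.sub_apply, mul_sub, Finset.sum_sub_distrib]

end OrthonormalBasis

section HodgeDual

variable {o : Orientation ℝ V (Fin 8)} {hd : Module.finrank ℝ V = 8}

theorem IsHodgeDualV.add {α β ψ χ : V [⋀^Fin 4]→ₗ[ℝ] ℝ} (hα : IsHodgeDualV o hd α ψ)
    (hβ : IsHodgeDualV o hd β χ) : IsHodgeDualV o hd (α + β) (ψ + χ) := fun γ => by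
  rw [wedgeAM_add, hα, hβ, formInnerV_add, add_smul]

theorem IsHodgeDualV.sub {α β ψ χ : V [⋀^Fin 4]→ₗ[ℝ] ℝ} (hα : IsHodgeDualV o hd α ψ)
    (hβ : IsHodgeDualV o hd β χ) : IsHodgeDualV o hd (α - β) (ψ - χ) := fun γ => by
  rw [wedgeAM_sub, hα, hβ, formInnerV_sub]
  exact (sub_smul _ _ _).symm

theorem isHodgeDualV_coordForm (b : OrthonormalBasis (Fin 8) ℝ V) {I J : Fin 4 → Fin 8}
    (s : Equiv.Perm (Fin 8)) (hs : Fin.append I J = s) (hsign : Equiv.Perm.sign s = 1) :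
    IsHodgeDualV b.toBasis.orientation hd (coordForm b.toBasis I) (coordForm b.toBasis J) :=
  fun γ => by
  rw [formInnerV_coordForm, volV_eq_det]
  have := wedgeAM_coordForm_eq_smul_det (k := 4) (l := 4) b.toBasis γ I J s hs
  rwa [hsign, one_smul, b.coe_toBasis] at this

end HodgeDual

section CayleyForm

/-- The coassociative form `∗φ₀` of `ℝ⁷`, written in the last seven coordinates of `ℝ⁸` and
extended to `ℝ⁸` annihilating the first basis vector. The terms are listed in the order of their
Hodge duals in `dx₀ ∧ φ₀`. -/
def psi0ext : (Fin 8 → ℝ) [⋀^Fin 4]→ₗ[ℝ] ℝ :=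
  dxs ![4,5,6,7] + dxs ![2,3,6,7] + dxs ![2,3,4,5] + dxs ![1,3,5,7]
    - dxs ![1,3,4,6] - dxs ![1,2,5,6] - dxs ![1,2,4,7]

theorem wedgeAM_dx0_phi0ext : wedgeAM (dxs ![0]) phi0ext =
    dxs ![0,1,2,3] + dxs ![0,1,4,5] + dxs ![0,1,6,7] + dxs ![0,2,4,6]
      - dxs ![0,2,5,7] - dxs ![0,3,4,7] - dxs ![0,3,5,6] := by
  have wedge_dx0 (i j m : Fin 8) : wedgeAM (dxs ![0]) (dxs ![i,j,m]) = dxs ![0,i,j,m] := by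
    simp only [← coordForm_basisFun, wedgeAM_coordForm]
    rfl
  simp only [phi0ext, wedgeAM_add, wedgeAM_sub, wedge_dx0]

theorem wedgeAM_dx0_phi0ext_add_psi0ext : wedgeAM (dxs ![0]) phi0ext + psi0ext = Omega0 := by
  rw [wedgeAM_dx0_phi0ext, psi0ext, Omega0]
  abel

theorem isHodgeDualV_psi0ext (b : OrthonormalBasis (Fin 8) ℝ V) (hd : Module.finrank ℝ V = 8) :
    IsHodgeDualV b.toBasis.orientation hd
      ((wedgeAM (dxs ![0]) phi0ext).compLinearMap b.toBasis.equivFun.toLinearMap)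
      (psi0ext.compLinearMap b.toBasis.equivFun.toLinearMap) := by
  have sub_compLinearMap (α β : (Fin 8 → ℝ) [⋀^Fin 4]→ₗ[ℝ] ℝ) (g : V →ₗ[ℝ] Fin 8 → ℝ) :
      (α - β).compLinearMap g = α.compLinearMap g - β.compLinearMap g := rfl
  have star {I J : Fin 4 → Fin 8} := isHodgeDualV_coordForm (hd := hd) b (I := I) (J := J)
  simp only [wedgeAM_dx0_phi0ext, psi0ext, sub_compLinearMap, AlternatingMap.add_compLinearMap]
  exact (star 1 (by decide) (by decide +kernel)).add
    (star (c[2, 4] * c[3, 5]) (by decide) (by decide +kernel))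
    |>.add (star (c[2, 6, 4] * c[3, 7, 5]) (by decide) (by decide +kernel))
    |>.add (star (c[1, 2, 4] * c[3, 6, 5]) (by decide) (by decide +kernel))
    |>.sub (star c[1, 2, 5, 3, 7, 6, 4] (by decide) (by decide +kernel))
    |>.sub (star c[1, 3, 7, 6, 5, 2, 4] (by decide) (by decide +kernel))
    |>.sub (star (c[1, 3, 6, 4] * c[2, 5]) (by decide) (by decide +kernel))

end CayleyForm

section Frames

variable {W : Type*} [NormedAddCommGroup W] [InnerProductSpace ℝ W]

theorem orientedEquiv_equivFun_symm_iff {o : Orientation ℝ W (Fin 8)}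
    (b : Module.Basis (Fin 8) ℝ W) :
    OrientedEquiv o b.equivFun.symm ↔ b.orientation = o := by
  have map_basisFun : (Pi.basisFun ℝ (Fin 8)).map b.equivFun.symm = b := by
    ext i
    simp
  rw [OrientedEquiv, ← Module.Basis.orientation_map, map_basisFun]

theorem isometricEquiv_equivFun_symm (b : OrthonormalBasis (Fin 8) ℝ W) :
    IsometricEquiv b.toBasis.equivFun.symm := fun x y => by
  simp [PiLp.inner_apply, mul_comm]

theorem IsometricEquiv.exists_orthonormalBasis {f : (Fin 8 → ℝ) ≃ₗ[ℝ] W}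
    (hf : IsometricEquiv f) :
    ∃ b : OrthonormalBasis (Fin 8) ℝ W, b.toBasis.equivFun.symm = f := by
  let b := Module.Basis.ofEquivFun f.symm
  have orthonormal_b : Orthonormal ℝ b := by
    rw [orthonormal_iff_ite]
    intro i j
    rw [Module.Basis.coe_ofEquivFun, LinearEquiv.symm_symm, hf]
    simp [Pi.single_apply, eq_comm]
  refine ⟨b.toOrthonormalBasis orthonormal_b, ?_⟩
  simp [b]

theorem PositiveAdaptedInducing.exists_orthonormalBasis {o : Orientation ℝ W (Fin 8)}
    {φ : W [⋀^Fin 3]→ₗ[ℝ] ℝ} {v : W} {H : Submodule ℝ W} (hφ : PositiveAdaptedInducing o φ v H) :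
    ∃ b : OrthonormalBasis (Fin 8) ℝ W, b.toBasis.orientation = o ∧ b 0 = v ∧
      phi0ext.compLinearMap b.toBasis.equivFun.toLinearMap = φ := by
  obtain ⟨f, ho, hf, hfv, -, hφf⟩ := hφ
  obtain ⟨b, rfl⟩ := hf.exists_orthonormalBasis
  refine ⟨b, (orientedEquiv_equivFun_symm_iff b.toBasis).1 ho, by simpa using hfv, ?_⟩
  rw [← hφf, AlternatingMap.compLinearMap_assoc, LinearEquiv.symm_comp,
    AlternatingMap.compLinearMap_id]

theorem admissibleFormInducing_Omega0_compLinearMap (b : OrthonormalBasis (Fin 8) ℝ W) :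
    AdmissibleFormInducing b.toBasis.orientation
      (Omega0.compLinearMap b.toBasis.equivFun.toLinearMap) := by
  refine ⟨b.toBasis.equivFun.symm, (orientedEquiv_equivFun_symm_iff b.toBasis).2 rfl,
    isometricEquiv_equivFun_symm b, ?_⟩
  rw [AlternatingMap.compLinearMap_assoc, LinearEquiv.comp_symm, AlternatingMap.compLinearMap_id]

end Frames

/-- Let `V` be an 8-dimensional oriented inner product space (its inner product
playing the role of `g`), `H` a 7-dimensional subspace, `v` a unit vector orthogonal to `H`
inducing the orientation of `H`, and `φ` a positive three-form on `H` (extended to `V`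
annihilating `v`) whose associated inner product is the restriction of that of `V`. Then
`Ω = v♭ ∧ φ + ∗(v♭ ∧ φ)` is an admissible four-form on `V` and the inner product induced by `Ω`
is exactly `g`. -/
theorem admissible_of_positive_hyperplane
    (o : Orientation ℝ V (Fin 8)) (hd : Module.finrank ℝ V = 8)
    (v : V) (H : Submodule ℝ V) (hH : Module.finrank ℝ H = 7)
    (hv : ⟪v, v⟫ = 1) (hvH : ∀ h ∈ H, ⟪v, h⟫ = 0)
    (φ : V [⋀^Fin 3]→ₗ[ℝ] ℝ) (hφ : PositiveAdaptedInducing o φ v H) :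
    ∃ ψ : V [⋀^Fin 4]→ₗ[ℝ] ℝ,
      IsHodgeDualV o hd (wedgeAM (flatForm v) φ) ψ ∧
      AdmissibleFormInducing o (wedgeAM (flatForm v) φ + ψ) := by
  obtain ⟨b, rfl, rfl, rfl⟩ := hφ.exists_orthonormalBasis
  have flat_wedge : wedgeAM (flatForm (b 0))
        (phi0ext.compLinearMap b.toBasis.equivFun.toLinearMap) =
      (wedgeAM (dxs ![0]) phi0ext).compLinearMap b.toBasis.equivFun.toLinearMap := by
    rw [flatForm_orthonormalBasis, wedgeAM_compLinearMap, coordForm]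
  rw [flat_wedge]
  refine ⟨psi0ext.compLinearMap b.toBasis.equivFun.toLinearMap, isHodgeDualV_psi0ext b hd, ?_⟩
  rw [← AlternatingMap.add_compLinearMap, wedgeAM_dx0_phi0ext_add_psi0ext]
  exact admissibleFormInducing_Omega0_compLinearMap b

end
end

section
/- The subgroup Spin(7) ⊂ SO(8), realized as the stabilizer of the Cayley four-form Ω₀, acts transitively on the unit sphere S⁷ ⊂ ℝ⁸. -/
noncomputable section

open scoped BigOperators

/-! Left multiplication `L e` by an imaginary octonion `e : ℝ⁷` makes `ℝ⁸` an orthogonal module over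
the Clifford algebra of `ℝ⁷`: `L e` is skew and `(L e)² = -|e|²`. Its transpose `[u, v] : ℝ⁷`, given
by `⟨f, [u, v]⟩ = ⟨L f u, v⟩`, collects seven two-forms `ωₖ` on `ℝ⁸`, and `Ω₀ = (1/6) ∑ₖ ωₖ ∧ ωₖ`.
For a unit vector `e` the Clifford relation turns `L e` into minus the reflection in `e` on the
values of `[·, ·]`, which is orthogonal, so `L e` preserves `Ω₀`. Given a unit vector `x`, the
isometry `e ↦ L e x` fills `xᗮ` by a dimension count, hence some unit `e` moves `x` to any unit
vector orthogonal to it. Passing through a third vector orthogonal to both reaches every `y`. -/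

open Matrix

section CliffordRep

variable {R m n : Type*} [CommRing R] [Fintype m] [Fintype n]

/-- An orthogonal representation on `Rⁿ` of the Clifford algebra of the quadratic form
`e ↦ -(e ⬝ᵥ e)` on `Rᵐ`, given by the action of the generating vectors `e`. -/
structure IsCliffordRep [DecidableEq n] (J : (m → R) →ₗ[R] Matrix n n R) : Prop where
  transpose_eq_neg (e : m → R) : (J e)ᵀ = -J e
  mul_self (e : m → R) : J e * J e = -(e ⬝ᵥ e) • (1 : Matrix n n R)

/-- The transpose of Clifford multiplication `e ↦ J e *ᵥ u`, that is, the tuple of bilinear forms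
`(J eₖ *ᵥ u) ⬝ᵥ v` for the standard basis `eₖ` of `Rᵐ`. For octonions this is the imaginary part of
`v * conj u`. -/
def cliffordPairing [DecidableEq m] (J : (m → R) →ₗ[R] Matrix n n R) (u v : n → R) : m → R :=
  fun k => (J (Pi.single k 1) *ᵥ u) ⬝ᵥ v

/-- The four-form `½ ∑ₖ ωₖ ∧ ωₖ`, where the `ωₖ` are the components of `cliffordPairing J`. -/
def cliffordFourForm [DecidableEq m] (J : (m → R) →ₗ[R] Matrix n n R) (a b c d : n → R) : R :=
  cliffordPairing J a b ⬝ᵥ cliffordPairing J c d - cliffordPairing J a c ⬝ᵥ cliffordPairing J b d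
    + cliffordPairing J a d ⬝ᵥ cliffordPairing J b c

theorem dotProduct_cliffordPairing [DecidableEq m] (J : (m → R) →ₗ[R] Matrix n n R)
    (f : m → R) (u v : n → R) : f ⬝ᵥ cliffordPairing J u v = (J f *ᵥ u) ⬝ᵥ v := by
  conv_rhs => rw [pi_eq_sum_univ' f, map_sum, sum_mulVec, sum_dotProduct]
  simp only [map_smul, smul_mulVec, smul_dotProduct, smul_eq_mul]
  rfl

namespace IsCliffordRep

variable [DecidableEq n] {J : (m → R) →ₗ[R] Matrix n n R}

theorem mul_add_mul_swap (hJ : IsCliffordRep J) (e f : m → R) :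
    J e * J f + J f * J e = -(2 * (e ⬝ᵥ f)) • (1 : Matrix n n R) := by
  have polarized := hJ.mul_self (e + f)
  rw [map_add, add_mul, mul_add, mul_add, hJ.mul_self, hJ.mul_self, add_dotProduct,
    dotProduct_add, dotProduct_add, dotProduct_comm f e] at polarized
  linear_combination (norm := module) polarized

theorem mul_mul_self_eq (hJ : IsCliffordRep J) (e f : m → R) :
    J e * J f * J e = (e ⬝ᵥ e) • J f - (2 * (e ⬝ᵥ f)) • J e := by
  rw [eq_sub_of_add_eq (hJ.mul_add_mul_swap e f), sub_mul, mul_assoc, hJ.mul_self,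
    Matrix.smul_mul, Matrix.mul_smul, one_mul, mul_one]
  module

theorem mulVec_dotProduct (hJ : IsCliffordRep J) (e : m → R) (u v : n → R) :
    (J e *ᵥ u) ⬝ᵥ v = -(u ⬝ᵥ (J e *ᵥ v)) := by
  rw [dotProduct_mulVec, ← mulVec_transpose, hJ.transpose_eq_neg, neg_mulVec, neg_dotProduct,
    neg_neg]

theorem mulVec_dotProduct_mulVec (hJ : IsCliffordRep J) (e : m → R) (u v : n → R) :
    (J e *ᵥ u) ⬝ᵥ (J e *ᵥ v) = (e ⬝ᵥ e) * (u ⬝ᵥ v) := by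
  rw [hJ.mulVec_dotProduct, mulVec_mulVec, hJ.mul_self, smul_mulVec, one_mulVec, dotProduct_smul,
    smul_eq_mul, neg_mul, neg_neg]

section FourForm

variable [DecidableEq m]

theorem cliffordPairing_mulVec (hJ : IsCliffordRep J) (e : m → R) (u v : n → R) :
    cliffordPairing J (J e *ᵥ u) (J e *ᵥ v)
      = (2 * (e ⬝ᵥ cliffordPairing J u v)) • e - (e ⬝ᵥ e) • cliffordPairing J u v := by
  refine dotProduct_eq _ _ fun f => ?_
  rw [dotProduct_comm _ f, dotProduct_comm _ f]
  calc f ⬝ᵥ cliffordPairing J (J e *ᵥ u) (J e *ᵥ v)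
      = -((J e * J f * J e) *ᵥ u) ⬝ᵥ v := by
        rw [dotProduct_cliffordPairing, ← neg_eq_iff_eq_neg.2 (hJ.mulVec_dotProduct e _ v),
          mulVec_mulVec, mulVec_mulVec, mul_assoc, neg_dotProduct]
    _ = f ⬝ᵥ ((2 * (e ⬝ᵥ cliffordPairing J u v)) • e - (e ⬝ᵥ e) • cliffordPairing J u v) := by
        rw [hJ.mul_mul_self_eq, sub_mulVec, smul_mulVec, smul_mulVec, neg_dotProduct,
          sub_dotProduct, smul_dotProduct, smul_dotProduct, ← dotProduct_cliffordPairing,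
          ← dotProduct_cliffordPairing, dotProduct_sub, dotProduct_smul, dotProduct_smul,
          dotProduct_comm f e]
        simp only [smul_eq_mul]
        ring

theorem cliffordPairing_mulVec_dotProduct (hJ : IsCliffordRep J) (e : m → R) (a b c d : n → R) :
    cliffordPairing J (J e *ᵥ a) (J e *ᵥ b) ⬝ᵥ cliffordPairing J (J e *ᵥ c) (J e *ᵥ d)
      = (e ⬝ᵥ e) ^ 2 * (cliffordPairing J a b ⬝ᵥ cliffordPairing J c d) := by
  simp only [hJ.cliffordPairing_mulVec, sub_dotProduct, dotProduct_sub, smul_dotProduct,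
    dotProduct_smul, smul_eq_mul, dotProduct_comm _ e]
  ring

theorem cliffordFourForm_mulVec (hJ : IsCliffordRep J) (e : m → R) (a b c d : n → R) :
    cliffordFourForm J (J e *ᵥ a) (J e *ᵥ b) (J e *ᵥ c) (J e *ᵥ d)
      = (e ⬝ᵥ e) ^ 2 * cliffordFourForm J a b c d := by
  simp only [cliffordFourForm, hJ.cliffordPairing_mulVec_dotProduct]
  ring

end FourForm

/-- The invertible linear map `u ↦ J e *ᵥ u` for a unit vector `e`; its inverse is `-J e`. -/
def unitEquiv (hJ : IsCliffordRep J) {e : m → R} (he : e ⬝ᵥ e = 1) : (n → R) ≃ₗ[R] (n → R) :=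
  toLin'OfInv (M := -J e) (M' := J e) (by simp [hJ.mul_self, he]) (by simp [hJ.mul_self, he])

theorem unitEquiv_apply (hJ : IsCliffordRep J) {e : m → R} (he : e ⬝ᵥ e = 1) (u : n → R) :
    hJ.unitEquiv he u = J e *ᵥ u := rfl

end IsCliffordRep

end CliffordRep

section Field

variable {K n : Type*} [Field K] [Fintype n]

theorem finrank_ker_dotProduct_add_one {x : n → K} (hx : x ≠ 0) :
    Module.finrank K (LinearMap.ker (dotProductBilin K K x)) + 1 = Fintype.card n := by
  have functional_ne_zero : dotProductBilin K K x ≠ 0 := fun h =>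
    hx (dotProduct_eq_zero x (LinearMap.congr_fun h))
  rw [Module.Dual.finrank_ker_add_one_of_ne_zero functional_ne_zero,
    Module.finrank_fintype_fun_eq_card]

theorem exists_ne_zero_dotProduct_eq_zero_and (hn : 2 < Fintype.card n) (x y : n → K) :
    ∃ z ≠ 0, x ⬝ᵥ z = 0 ∧ y ⬝ᵥ z = 0 := by
  have ker_ne_bot : LinearMap.ker (Matrix.of ![x, y]).mulVecLin ≠ ⊥ :=
    LinearMap.ker_ne_bot_of_finrank_lt (by simpa using hn)
  obtain ⟨z, hz, hz0⟩ := Submodule.exists_mem_ne_zero_of_ne_bot ker_ne_bot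
  exact ⟨z, hz0, congrFun hz 0, congrFun hz 1⟩

end Field

section OrderedField

variable {K m n : Type*} [Field K] [LinearOrder K] [IsStrictOrderedRing K] [Fintype m] [Fintype n]

namespace IsCliffordRep

variable [DecidableEq n] {J : (m → K) →ₗ[K] Matrix n n K}

theorem dotProduct_mulVec_self (hJ : IsCliffordRep J) (e : m → K) (x : n → K) :
    x ⬝ᵥ (J e *ᵥ x) = 0 := by
  rw [← self_eq_neg, ← hJ.mulVec_dotProduct, dotProduct_comm]

theorem mulVec_injective (hJ : IsCliffordRep J) {x : n → K} (hx : x ≠ 0) :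
    Function.Injective ((mulVecBilin K K).flip x ∘ₗ J) := by
  refine (injective_iff_map_eq_zero _).2 fun e he => ?_
  have norm_mul : (e ⬝ᵥ e) * (x ⬝ᵥ x) = 0 := by
    rw [← hJ.mulVec_dotProduct_mulVec, show J e *ᵥ x = 0 from he, zero_dotProduct]
  exact dotProduct_self_eq_zero.1
    ((mul_eq_zero.1 norm_mul).resolve_right (mt dotProduct_self_eq_zero.1 hx))

theorem exists_mulVec_eq_of_dotProduct_eq_zero (hJ : IsCliffordRep J)
    (hmn : Fintype.card m + 1 = Fintype.card n) {x y : n → K} (hx : x ≠ 0) (hxy : x ⬝ᵥ y = 0) :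
    ∃ e, J e *ᵥ x = y := by
  have range_le : LinearMap.range ((mulVecBilin K K).flip x ∘ₗ J)
      ≤ LinearMap.ker (dotProductBilin K K x) := by
    rintro _ ⟨e, rfl⟩
    exact hJ.dotProduct_mulVec_self e x
  have finrank_eq : Module.finrank K (LinearMap.range ((mulVecBilin K K).flip x ∘ₗ J))
      = Module.finrank K (LinearMap.ker (dotProductBilin K K x)) := by
    rw [LinearMap.finrank_range_of_inj (hJ.mulVec_injective hx),
      Module.finrank_fintype_fun_eq_card]
    exact Nat.succ_injective (hmn.trans (finrank_ker_dotProduct_add_one hx).symm)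
  have y_mem : y ∈ LinearMap.ker (dotProductBilin K K x) := hxy
  rwa [← Submodule.eq_of_le_of_finrank_eq range_le finrank_eq] at y_mem

theorem exists_unit_mulVec_eq (hJ : IsCliffordRep J) (hmn : Fintype.card m + 1 = Fintype.card n)
    {x y : n → K} (hx : x ⬝ᵥ x = 1) (hy : y ⬝ᵥ y = 1) (hxy : x ⬝ᵥ y = 0) :
    ∃ e, e ⬝ᵥ e = 1 ∧ J e *ᵥ x = y := by
  have x_ne_zero : x ≠ 0 := by
    rintro rfl
    simp at hx
  obtain ⟨e, rfl⟩ := hJ.exists_mulVec_eq_of_dotProduct_eq_zero hmn x_ne_zero hxy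
  refine ⟨e, ?_, rfl⟩
  rw [← hy, hJ.mulVec_dotProduct_mulVec, hx, mul_one]

end IsCliffordRep

end OrderedField

theorem exists_smul_dotProduct_self_eq_one {n : Type*} [Fintype n] {z : n → ℝ} (hz : z ≠ 0) :
    ∃ c : ℝ, (c • z) ⬝ᵥ (c • z) = 1 := by
  have norm_pos : 0 < z ⬝ᵥ z := dotProduct_star_self_pos_iff.2 hz
  refine ⟨(√(z ⬝ᵥ z))⁻¹, ?_⟩
  rw [smul_dotProduct, dotProduct_smul, smul_eq_mul, smul_eq_mul, ← mul_assoc, ← mul_inv,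
    Real.mul_self_sqrt norm_pos.le, inv_mul_cancel₀ norm_pos.ne']

theorem exists_unit_dotProduct_eq_zero {n : Type*} [Fintype n] (hn : 2 < Fintype.card n)
    (x y : n → ℝ) : ∃ z, z ⬝ᵥ z = 1 ∧ x ⬝ᵥ z = 0 ∧ y ⬝ᵥ z = 0 := by
  obtain ⟨w, w_ne_zero, hxw, hyw⟩ := exists_ne_zero_dotProduct_eq_zero_and hn x y
  obtain ⟨c, hc⟩ := exists_smul_dotProduct_self_eq_one w_ne_zero
  exact ⟨c • w, hc, by rw [dotProduct_smul, hxw, smul_zero],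
    by rw [dotProduct_smul, hyw, smul_zero]⟩

/-- The Plücker coordinates of `u ∧ v`, that is, the `2 × 2` minors of the matrix with rows `u`
and `v`. -/
def pluckerCoord {R ι : Type*} [CommRing R] (u v : ι → R) (i j : ι) : R :=
  u i * v j - u j * v i

section Octonion

variable {R : Type*} [CommRing R]

/-- Left multiplication by the imaginary octonion `e` on `R⁸`, whose coordinate `0` is the real
part. The multiplication table is chosen so that the two-forms of `cliffordPairing` produce the
signs of `Omega0`. -/
def octonionLeftMul : (Fin 7 → R) →ₗ[R] Matrix (Fin 8) (Fin 8) R where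
  toFun e :=
    !![  0, -e 0, -e 1, -e 2, -e 3, -e 4, -e 5, -e 6;
       e 0,    0, -e 2,  e 1, -e 4,  e 3, -e 6,  e 5;
       e 1,  e 2,    0, -e 0, -e 5,  e 6,  e 3, -e 4;
       e 2, -e 1,  e 0,    0,  e 6,  e 5, -e 4, -e 3;
       e 3,  e 4,  e 5, -e 6,    0, -e 0, -e 1,  e 2;
       e 4, -e 3, -e 6, -e 5,  e 0,    0,  e 2,  e 1;
       e 5,  e 6, -e 3,  e 4,  e 1, -e 2,    0, -e 0;
       e 6, -e 5,  e 4,  e 3, -e 2, -e 1,  e 0,    0]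
  map_add' e f := by
    ext i j
    fin_cases i <;> fin_cases j <;> simp <;> ring
  map_smul' c e := by
    ext i j
    fin_cases i <;> fin_cases j <;> simp

theorem octonionLeftMul_mulVec_mulVec_self (e : Fin 7 → R) (v : Fin 8 → R) :
    octonionLeftMul e *ᵥ (octonionLeftMul e *ᵥ v) = -(e ⬝ᵥ e) • v := by
  ext i
  fin_cases i <;>
    simp [octonionLeftMul, mulVec, dotProduct, Fin.sum_univ_seven, Fin.sum_univ_eight] <;> ring

theorem isCliffordRep_octonionLeftMul : IsCliffordRep (octonionLeftMul (R := R)) where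
  transpose_eq_neg e := by
    ext i j
    fin_cases i <;> fin_cases j <;> simp [octonionLeftMul]
  mul_self e := ext_of_mulVec_single fun i => by
    rw [← mulVec_mulVec, octonionLeftMul_mulVec_mulVec_self, smul_mulVec, one_mulVec]

theorem cliffordPairing_octonionLeftMul (u v : Fin 8 → R) :
    cliffordPairing octonionLeftMul u v =
      let p := pluckerCoord u v
      ![p 0 1 + p 2 3 + p 4 5 + p 6 7,
        p 0 2 - p 1 3 + p 4 6 - p 5 7,
        p 0 3 + p 1 2 - p 4 7 - p 5 6,
        p 0 4 - p 1 5 - p 2 6 + p 3 7,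
        p 0 5 + p 1 4 + p 2 7 + p 3 6,
        p 0 6 - p 1 7 + p 2 4 - p 3 5,
        p 0 7 + p 1 6 - p 2 5 - p 3 4] := by
  ext k
  fin_cases k <;>
    simp [cliffordPairing, octonionLeftMul, pluckerCoord, mulVec, dotProduct,
      Fin.sum_univ_eight] <;> ring

end Octonion

theorem det_fin_four_eq_pluckerCoord {R : Type*} [CommRing R] (A : Matrix (Fin 4) (Fin 4) R) :
    A.det =
      let p := pluckerCoord (A 0) (A 1)
      let q := pluckerCoord (A 2) (A 3)
      p 0 1 * q 2 3 - p 0 2 * q 1 3 + p 0 3 * q 1 2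
        + p 1 2 * q 0 3 - p 1 3 * q 0 2 + p 2 3 * q 0 1 := by
  rw [det_succ_row_zero, Fin.sum_univ_four]
  simp only [det_fin_three, submatrix_apply, pluckerCoord, Fin.succAbove, Fin.isValue,
    Fin.reduceSucc, Fin.reduceCastSucc, Fin.castSucc_zero, Fin.castSucc_one, Fin.reduceLT,
    lt_self_iff_false, ↓reduceIte, Fin.succ_zero_eq_one, Fin.succ_one_eq_two,
    Fin.coe_ofNat_eq_mod]
  ring

theorem dxs_apply {n k : ℕ} (idx : Fin k → Fin n) (v : Fin k → Fin n → ℝ) :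
    dxs idx v = (Matrix.of fun a b => v a (idx b)).det := rfl

theorem three_mul_Omega0_apply (v : Fin 4 → Fin 8 → ℝ) :
    3 * Omega0 v = cliffordFourForm octonionLeftMul (v 0) (v 1) (v 2) (v 3) := by
  simp only [Omega0, AlternatingMap.add_apply, AlternatingMap.sub_apply, dxs_apply,
    det_fin_four_eq_pluckerCoord, cliffordFourForm, cliffordPairing_octonionLeftMul, pluckerCoord,
    dotProduct, Fin.sum_univ_seven, of_apply, cons_val_zero, cons_val_one, cons_val]
  ring

/-- `Spin(7)` as a group of linear automorphisms of `ℝ⁸`: the orthogonal maps that preserve the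
Cayley form. -/
def spin7 : Subgroup ((Fin 8 → ℝ) ≃ₗ[ℝ] (Fin 8 → ℝ)) where
  carrier := {A | Omega0.compLinearMap A.toLinearMap = Omega0 ∧ ∀ u w, A u ⬝ᵥ A w = u ⬝ᵥ w}
  one_mem' := ⟨rfl, fun _ _ => rfl⟩
  mul_mem' {A B} hA hB := by
    refine ⟨?_, fun u w => (hA.2 _ _).trans (hB.2 u w)⟩
    calc Omega0.compLinearMap (A * B).toLinearMap
        = (Omega0.compLinearMap A.toLinearMap).compLinearMap B.toLinearMap := rfl
      _ = Omega0 := by rw [hA.1, hB.1]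
  inv_mem' {A} hA := by
    refine ⟨?_, fun u w => ?_⟩
    · conv_lhs => rw [← hA.1]
      ext v
      simp
    · rw [← hA.2]
      simp

theorem unitEquiv_octonionLeftMul_mem_spin7 {e : Fin 7 → ℝ} (he : e ⬝ᵥ e = 1) :
    isCliffordRep_octonionLeftMul.unitEquiv he ∈ spin7 := by
  refine ⟨AlternatingMap.ext fun v => ?_, fun u w => ?_⟩
  · refine mul_left_cancel₀ (three_ne_zero (α := ℝ)) ?_
    simp only [AlternatingMap.compLinearMap_apply, LinearEquiv.coe_coe, three_mul_Omega0_apply,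
      IsCliffordRep.unitEquiv_apply, isCliffordRep_octonionLeftMul.cliffordFourForm_mulVec, he,
      one_pow, one_mul]
  · simp only [IsCliffordRep.unitEquiv_apply,
      isCliffordRep_octonionLeftMul.mulVec_dotProduct_mulVec, he, one_mul]

theorem exists_mem_spin7_apply_eq_of_dotProduct_eq_zero {x y : Fin 8 → ℝ} (hx : x ⬝ᵥ x = 1)
    (hy : y ⬝ᵥ y = 1) (hxy : x ⬝ᵥ y = 0) : ∃ A ∈ spin7, A x = y := by
  obtain ⟨e, he, hex⟩ :=
    isCliffordRep_octonionLeftMul.exists_unit_mulVec_eq (by simp) hx hy hxy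
  exact ⟨_, unitEquiv_octonionLeftMul_mem_spin7 he, hex⟩

/-- The subgroup `Spin(7) ⊂ SO(8)`, realized as the stabilizer of the Cayley
four-form `Ω₀` in `GL(8,ℝ)`, acts transitively on the unit sphere `S⁷ ⊂ ℝ⁸`: any unit vector
can be mapped to any other by a linear automorphism preserving `Ω₀` (such automorphisms
automatically preserve the Euclidean inner product). -/
theorem spin7_transitive_on_sphere :
    ∀ x y : Fin 8 → ℝ, (∑ i, x i * x i) = 1 → (∑ i, y i * y i) = 1 →
      ∃ A : (Fin 8 → ℝ) ≃ₗ[ℝ] (Fin 8 → ℝ),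
        Omega0.compLinearMap A.toLinearMap = Omega0 ∧
        (∀ u w : Fin 8 → ℝ, (∑ i, A u i * A w i) = ∑ i, u i * w i) ∧
        A x = y := by
  intro x y hx hy
  obtain ⟨z, hz, hxz, hyz⟩ := exists_unit_dotProduct_eq_zero (by simp) x y
  obtain ⟨A, hA, rfl⟩ := exists_mem_spin7_apply_eq_of_dotProduct_eq_zero hx hz hxz
  obtain ⟨B, hB, rfl⟩ :=
    exists_mem_spin7_apply_eq_of_dotProduct_eq_zero hz hy ((dotProduct_comm _ _).trans hyz)
  obtain ⟨preserves_Omega0, preserves_dotProduct⟩ := spin7.mul_mem hB hA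
  exact ⟨B * A, preserves_Omega0, preserves_dotProduct, rfl⟩

end
end
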